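/- arXiv:1409.8041 — 2 statements merged into one kernel-verified Lean document; each statement's English description precedes it below -/
import Mathlib

section
/- Let G be a group, t ∈ G, and K ⊆ G a symmetric subset (K = K⁻¹) with 1 ∈ K satisfying t·K·K·t⁻¹ ⊆ K. Then: (i) t·K·t⁻¹ ⊆ K, so the sets t⁻ⁿ·K·tⁿ (n ∈ ℕ) form an increasing family, and for every k ∈ ℕ one has tᵏ·K^(2ᵏ)·t⁻ᵏ ⊆ K, where K^m denotes the set of products of m elements of K; (ii) if H denotes the subgroup of G generated by the union over n ∈ ℕ of the sets t⁻ⁿ·K·tⁿ, then for every h ∈ H there exists n₀ ∈ ℕ such that tⁿ·h·t⁻ⁿ ∈ K for all n ≥ n₀. -/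
open Pointwise

/-! Conjugation by `t` is an endomorphism `φ`, and `t⁻ⁿ * K * tⁿ` is the preimage of `K` under the
`n`-th iterate of `φ`. If two elements lie in `K` after `n` applications of `φ`, their product lies
in `K` after one more; hence each application halves the length of a product of elements of `K`,
and the elements that `φ` eventually moves into `K` are closed under products. -/

open Filter Set

theorem monotone_preimage_iterate {α : Type*} {f : α → α} {s : Set α} (hf : MapsTo f s s) :
    Monotone fun n : ℕ => f^[n] ⁻¹' s :=
  monotone_nat_of_le_succ fun n x (hx : f^[n] x ∈ s) => by
    simpa only [mem_preimage, Function.iterate_succ_apply'] using hf hx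

theorem eventually_iterate_mul_mem {F M : Type*} [Mul M] [FunLike F M M] [MulHomClass F M M]
    {φ : F} {K : Set M} (hφ : MapsTo φ (K * K) K) {x y : M}
    (hx : ∀ᶠ n in atTop, φ^[n] x ∈ K) (hy : ∀ᶠ n in atTop, φ^[n] y ∈ K) :
    ∀ᶠ n in atTop, φ^[n] (x * y) ∈ K := by
  rw [← map_add_atTop_eq_nat 1, eventually_map]
  filter_upwards [hx, hy] with n hxn hyn
  rw [Function.iterate_succ_apply', iterate_map_mul]
  exact hφ (mul_mem_mul hxn hyn)

theorem mapsTo_iterate_pow_two_pow {F M : Type*} [Monoid M] [FunLike F M M] [MulHomClass F M M]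
    {φ : F} {K : Set M} (hφ : MapsTo φ (K * K) K) (k : ℕ) :
    MapsTo φ^[k] (K ^ 2 ^ k) K := by
  induction k with
  | zero => simpa using mapsTo_id K
  | succ k ih =>
    rw [pow_succ, mul_two, pow_add]
    rintro _ ⟨a, ha, b, hb, rfl⟩
    rw [Function.iterate_succ_apply', iterate_map_mul]
    exact hφ (mul_mem_mul (ih ha) (ih hb))

/-- The subgroup of elements that the iterates of an endomorphism `φ` eventually move into `K`,
where `K` is a symmetric set containing `1` such that `φ` maps `K * K` into `K`. -/
def contractedSubgroup {F G : Type*} [Group G] [FunLike F G G] [MonoidHomClass F G G]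
    (φ : F) (K : Set G) (hsymm : K = K⁻¹) (hone : 1 ∈ K) (hφ : MapsTo φ (K * K) K) :
    Subgroup G where
  carrier := {h | ∀ᶠ n in atTop, φ^[n] h ∈ K}
  one_mem' := Eventually.of_forall fun n => by rwa [iterate_map_one]
  mul_mem' := eventually_iterate_mul_mem hφ
  inv_mem' hx := hx.mono fun n hn => by rwa [iterate_map_inv, hsymm, Set.inv_mem_inv]

theorem conjugation_contracts_of_contracting_double_general {F G : Type*} [Group G]
    [FunLike F G G] [MonoidHomClass F G G] (φ : F) (K : Set G)
    (hsymm : K = K⁻¹) (hone : 1 ∈ K) (hφ : MapsTo φ (K * K) K) :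
    (MapsTo φ K K ∧
      (Monotone fun n : ℕ => φ^[n] ⁻¹' K) ∧
      ∀ k : ℕ, MapsTo φ^[k] (K ^ 2 ^ k) K) ∧
    ∀ h ∈ Subgroup.closure (⋃ n : ℕ, φ^[n] ⁻¹' K), ∀ᶠ n in atTop, φ^[n] h ∈ K := by
  have hmaps : MapsTo φ K K := hφ.mono_left (subset_mul_left K hone)
  have hmono : Monotone fun n : ℕ => φ^[n] ⁻¹' K := monotone_preimage_iterate hmaps
  have hclosure : Subgroup.closure (⋃ n : ℕ, φ^[n] ⁻¹' K) ≤
      contractedSubgroup φ K hsymm hone hφ :=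
    (Subgroup.closure_le _).2 <| iUnion_subset fun m _ hx =>
      eventually_atTop.2 ⟨m, fun _ hmn => hmono hmn hx⟩
  exact ⟨⟨hmaps, hmono, mapsTo_iterate_pow_two_pow hφ⟩, fun _ hh => hclosure hh⟩

theorem iterate_conj_apply {G : Type*} [Group G] (t x : G) (n : ℕ) :
    (MulAut.conj t)^[n] x = t ^ n * x * (t ^ n)⁻¹ := by
  rw [← MulAut.conj_apply, map_pow]
  exact smul_iterate_apply (MulAut.conj t) n x

theorem image_conj_pow_inv_eq_preimage_iterate_conj {G : Type*} [Group G] (t : G) (K : Set G)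
    (n : ℕ) :
    (fun x => (t ^ n)⁻¹ * x * t ^ n) '' K = (MulAut.conj t)^[n] ⁻¹' K := by
  refine congrFun (image_eq_preimage_of_inverse (fun x => ?_) fun x => ?_) K <;>
    rw [iterate_conj_apply] <;> group

/-- The purely group-theoretic core of Proposition 4.8. Let `G` be a group, `t ∈ G`, and
`K ⊆ G` a symmetric subset with `1 ∈ K` such that `t * K * K * t⁻¹ ⊆ K`. Then:
(i) `t * K * t⁻¹ ⊆ K`, the sets `t⁻ⁿ * K * tⁿ` form an increasing family, and
`tᵏ * K ^ (2 ^ k) * t⁻ᵏ ⊆ K` for all `k`; (ii) if `H` is the subgroup generated by the union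
of the sets `t⁻ⁿ * K * tⁿ`, then every `h ∈ H` satisfies `tⁿ * h * t⁻ⁿ ∈ K` for all
sufficiently large `n`. -/
theorem conjugation_contracts_of_contracting_double
    {G : Type*} [Group G] (t : G) (K : Set G)
    (hKsym : K = K⁻¹) (hKone : (1 : G) ∈ K)
    (hconj : ∀ a ∈ K, ∀ b ∈ K, t * (a * b) * t⁻¹ ∈ K) :
    ((∀ a ∈ K, t * a * t⁻¹ ∈ K) ∧
      (∀ m n : ℕ, m ≤ n →
        (fun x => (t ^ m)⁻¹ * x * t ^ m) '' K ⊆ (fun x => (t ^ n)⁻¹ * x * t ^ n) '' K) ∧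
      (∀ k : ℕ, ∀ x ∈ K ^ (2 ^ k), t ^ k * x * (t ^ k)⁻¹ ∈ K)) ∧
    (∀ h ∈ Subgroup.closure (⋃ n : ℕ, (fun x => (t ^ n)⁻¹ * x * t ^ n) '' K),
      ∃ n₀ : ℕ, ∀ n : ℕ, n₀ ≤ n → t ^ n * h * (t ^ n)⁻¹ ∈ K) := by
  simp only [image_conj_pow_inv_eq_preimage_iterate_conj, ← iterate_conj_apply,
    ← eventually_atTop]
  exact conjugation_contracts_of_contracting_double_general
    (MulAut.conj t) K hKsym hKone (mul_subset_iff.2 hconj)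
end

section
/- Let (X, d) be a metric space with a basepoint e ∈ X, and let c > 0 be such that X is c-coarsely connected. Assume X is unbounded: for every r ∈ ℝ there exists x ∈ X with d(e, x) > r. Then for every real ℓ > 0 and every sequence s : ℕ → ℝ of positive reals tending to +∞, there exists a sequence x : ℕ → X such that d(e, xₙ) ≤ ℓ·sₙ + c for every n and the sequence d(e, xₙ)/sₙ converges to ℓ as n → ∞ (in particular its limit along every nonprincipal ultrafilter on ℕ equals ℓ, so every asymptotic cone of X contains a point at distance exactly ℓ from the basepoint). -/
open Filter

/-! The distance to `e` starts at `0`, is unbounded, and grows by at most `c` along each step of a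
`c`-chain, so a chain cannot jump over a window `(r, r + c]` with `0 ≤ r`. Picking a point whose
distance lies in the window at `r = ℓ * s i` leaves an error of at most `c`, which vanishes after
division by `s i`. -/

open Asymptotics Bornology Set Topology

theorem exists_mem_Ioc_of_forall_lt_succ_le_add {α : Type*} [LinearOrder α] [Add α]
    [AddRightMono α] {f : ℕ → α} {a r : α} {n : ℕ} (h_start : f 0 ≤ r) (h_end : r < f n)
    (h_step : ∀ i < n, f (i + 1) ≤ f i + a) : ∃ i ≤ n, f i ∈ Ioc r (r + a) := by
  induction n with
  | zero => exact absurd h_end h_start.not_gt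
  | succ n ih =>
    rcases lt_or_ge r (f n) with h_above | h_below
    · obtain ⟨i, hi, hfi⟩ := ih h_above fun i hi => h_step i (hi.trans n.lt_succ_self)
      exact ⟨i, hi.trans n.le_succ, hfi⟩
    · exact ⟨n + 1, le_rfl, h_end, (h_step n n.lt_succ_self).trans (by gcongr)⟩

theorem tendsto_div_of_sub_mul_isBigO_one {ι 𝕜 : Type*} [NormedDivisionRing 𝕜] {F : Filter ι}
    {u s : ι → 𝕜} {a : 𝕜} (h : (fun i => u i - a * s i) =O[F] (fun _ => (1 : 𝕜)))
    (hs : Tendsto s F (cobounded 𝕜)) : Tendsto (fun i => u i / s i) F (𝓝 a) := by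
  have h_error : Tendsto (fun i => (u i - a * s i) / s i) F (𝓝 0) :=
    (h.trans_isLittleO ((isLittleO_const_id_cobounded 1).comp_tendsto hs)).tendsto_div_nhds_zero
  rw [← tendsto_sub_nhds_zero_iff]
  refine h_error.congr' ?_
  filter_upwards [hs.eventually_ne_cobounded 0] with i hi
  rw [sub_div, mul_div_cancel_right₀ a hi]

/-- A space is `c`-coarsely connected if any two of its points are joined by a finite chain whose
consecutive points are at distance at most `c`. A chain of `n` steps is encoded as a sequence
`ℕ → X` of which only the terms of index at most `n` matter. -/
def IsCoarselyConnected (X : Type*) [PseudoMetricSpace X] (c : ℝ) : Prop :=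
  ∀ x y : X, ∃ (n : ℕ) (f : ℕ → X), f 0 = x ∧ f n = y ∧ ∀ i < n, dist (f i) (f (i + 1)) ≤ c

section

variable {X : Type*} [PseudoMetricSpace X] {c : ℝ}

theorem IsCoarselyConnected.exists_mem_Ioc_of_lipschitzWith (hX : IsCoarselyConnected X c)
    {K : NNReal} {g : X → ℝ} (hg : LipschitzWith K g) {x y : X} {r : ℝ} (hx : g x ≤ r)
    (hy : r < g y) : ∃ z, g z ∈ Ioc r (r + K * c) := by
  obtain ⟨n, f, rfl, rfl, h_chain⟩ := hX x y
  have h_step : ∀ i < n, g (f (i + 1)) ≤ g (f i) + K * c := fun i hi =>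
    calc
      g (f (i + 1)) ≤ g (f i) + K * dist (f (i + 1)) (f i) := hg.le_add_mul _ _
      _ ≤ g (f i) + K * c := by
        rw [dist_comm]
        gcongr
        exact h_chain i hi
  obtain ⟨i, -, hi⟩ := exists_mem_Ioc_of_forall_lt_succ_le_add (f := g ∘ f) hx hy h_step
  exact ⟨f i, hi⟩

theorem IsCoarselyConnected.exists_dist_mem_Ioc (hX : IsCoarselyConnected X c) {e y : X} {r : ℝ}
    (hr : 0 ≤ r) (hy : r < dist e y) : ∃ x, dist e x ∈ Ioc r (r + c) := by
  simpa using hX.exists_mem_Ioc_of_lipschitzWith (LipschitzWith.dist_right e)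
    ((dist_self e).trans_le hr) hy

theorem exists_sequence_at_cone_distance_general (hX : IsCoarselyConnected X c) (e : X)
    (h_unbounded : ∀ r : ℝ, ∃ x : X, r < dist e x) {ι : Type*} {F : Filter ι} {ℓ : ℝ}
    (hℓ : 0 ≤ ℓ) {s : ι → ℝ} (hs : ∀ i, 0 ≤ s i) (hs_lim : Tendsto s F atTop) :
    ∃ x : ι → X, (∀ i, dist e (x i) ∈ Ioc (ℓ * s i) (ℓ * s i + c)) ∧
      Tendsto (fun i => dist e (x i) / s i) F (𝓝 ℓ) := by
  have h_point (i : ι) : ∃ x, dist e x ∈ Ioc (ℓ * s i) (ℓ * s i + c) :=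
    let ⟨_, hy⟩ := h_unbounded (ℓ * s i)
    hX.exists_dist_mem_Ioc (mul_nonneg hℓ (hs i)) hy
  choose x hx using h_point
  have h_error : (fun i => dist e (x i) - ℓ * s i) =O[F] (fun _ => (1 : ℝ)) := by
    refine .of_bound c (.of_forall fun i => ?_)
    rw [norm_one, mul_one, Real.norm_of_nonneg (sub_nonneg.2 (hx i).1.le)]
    exact sub_le_iff_le_add'.2 (hx i).2
  have hs_cobounded : Tendsto s F (cobounded ℝ) :=
    hs_lim.mono_right IsOrderBornology.atTop_le_cobounded
  exact ⟨x, hx, tendsto_div_of_sub_mul_isBigO_one h_error hs_cobounded⟩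

end

/-- **Lemma 3.2** (sequential form). Let `(X, d)` be an unbounded `c`-coarsely connected
metric space with basepoint `e`. Then for every `ℓ > 0` and every scaling sequence `s`
(positive reals tending to `+∞`) there is a sequence `x : ℕ → X` with
`dist e (x n) ≤ ℓ * s n + c` for all `n` and `dist e (x n) / s n → ℓ`; in particular every
asymptotic cone of `X` contains a point at distance exactly `ℓ` from the basepoint. -/
theorem exists_sequence_at_cone_distance
    {X : Type*} [MetricSpace X] (e : X) (c : ℝ) (hc : 0 < c)
    (hconn : ∀ x y : X, ∃ (n : ℕ) (f : ℕ → X), f 0 = x ∧ f n = y ∧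
      ∀ i < n, dist (f i) (f (i + 1)) ≤ c)
    (hunb : ∀ r : ℝ, ∃ x : X, r < dist e x) :
    ∀ ℓ : ℝ, 0 < ℓ → ∀ s : ℕ → ℝ, (∀ n, 0 < s n) → Tendsto s atTop atTop →
      ∃ x : ℕ → X, (∀ n, dist e (x n) ≤ ℓ * s n + c) ∧
        Tendsto (fun n => dist e (x n) / s n) atTop (nhds ℓ) := by
  intro ℓ hℓ s hs hs_lim
  obtain ⟨x, hx, hx_lim⟩ :=
    exists_sequence_at_cone_distance_general hconn e hunb hℓ.le (fun n => (hs n).le) hs_lim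
  exact ⟨x, fun n => (hx n).2, hx_lim⟩
end
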